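/- arXiv:math/9307216 — 2 statements merged into one kernel-verified Lean document; each statement's English description precedes it below -/
import Mathlib

section
/- (Addition formula for Hermite polynomials.) Let l and k be natural numbers with k ≥ 1, let x ∈ ℝ^k, and let y ∈ ℝ^k satisfy y_1² + ⋯ + y_k² = 1. Then h_l(x_1 y_1 + ⋯ + x_k y_k) = Σ_{(l_1,…,l_k): l_1+⋯+l_k = l} (l! / (l_1! ⋯ l_k!)) · y_1^{l_1} ⋯ y_k^{l_k} · h_{l_1}(x_1) ⋯ h_{l_k}(x_k), where the sum is over all k-tuples of natural numbers summing to l and h_m denotes the monic Hermite polynomial. -/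
/-!
The proof compares exponential generating functions. From the recurrence
`h_{n+2}(x) = x h_{n+1}(x) - (n+1)/2 h_n(x)`, the formal power series
`G_{x,y}(t) = ∑ₙ h_n(x) yⁿ tⁿ / n!` solves `G' = (x y - (y²/2) t) G` with `G(0) = 1`
(so `G = exp(x y t - y² t²/4)`). Hence `∏ᵢ G_{xᵢ,yᵢ}` solves the same kind of equation with
coefficients `∑ xᵢ yᵢ` and `(∑ yᵢ²)/2 = 1/2`, which is also the equation solved by
`G_{∑ xᵢ yᵢ, 1}`. A solution of such an equation is determined by its constant term
(`eq_of_derivative_eq`), so the two series agree, and comparing the coefficients of `t^l` is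
the addition formula.
-/

open Polynomial

/-- The monic Hermite polynomial `h_n`, defined by `h_n(x) = 2^{-n/2} · He_n(x·√2)`,
where `He_n` is the probabilists' Hermite polynomial (`Polynomial.hermite`). -/
noncomputable def hermiteMonic (n : ℕ) : Polynomial ℝ :=
  Polynomial.C ((2 : ℝ) ^ (-(n : ℝ) / 2)) *
    ((Polynomial.hermite n).map (Int.castRingHom ℝ)).comp
      (Polynomial.C (Real.sqrt 2) * Polynomial.X)

/-- A formal power series solving `P' = (u - v t) P` is determined by its constant term. -/
lemma eq_of_derivative_eq (u v : ℝ) (P Q : PowerSeries ℝ)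
    (hP : PowerSeries.derivative ℝ P = (PowerSeries.C u - PowerSeries.C v * PowerSeries.X) * P)
    (hQ : PowerSeries.derivative ℝ Q = (PowerSeries.C u - PowerSeries.C v * PowerSeries.X) * Q)
    (h0 : PowerSeries.coeff 0 P = PowerSeries.coeff 0 Q) : P = Q := by
  ext n
  induction n using Nat.strong_induction_on with
  | _ n ih =>
    rcases n with _ | n
    · exact h0
    have eP := congrArg (PowerSeries.coeff n) hP
    have eQ := congrArg (PowerSeries.coeff n) hQ
    rw [PowerSeries.coeff_derivative, sub_mul, map_sub, mul_assoc, PowerSeries.coeff_C_mul,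
      PowerSeries.coeff_C_mul] at eP eQ
    have hne : (n : ℝ) + 1 ≠ 0 := by positivity
    apply mul_right_cancel₀ hne
    rw [eP, eQ, ih n (by omega)]
    rcases n with _ | n
    · simp
    · rw [PowerSeries.coeff_succ_X_mul, PowerSeries.coeff_succ_X_mul, ih n (by omega)]

lemma derivative_hermite_succ (n : ℕ) :
    derivative (hermite (n + 1)) = ((n : ℤ[X]) + 1) * hermite n := by
  induction n with
  | zero => simp
  | succ n ih =>
    rw [hermite_succ (n + 1), derivative_sub, derivative_mul, ih, derivative_mul]
    have h := hermite_succ n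
    simp only [derivative_X, derivative_add, derivative_natCast, derivative_one]
    rw [h]
    push_cast
    ring

lemma two_rpow_neg_half (n : ℕ) : (2 : ℝ) ^ (-(n : ℝ) / 2) = (Real.sqrt 2)⁻¹ ^ n := by
  rw [Real.sqrt_eq_rpow, ← Real.rpow_neg (by norm_num), ← Real.rpow_natCast,
    ← Real.rpow_mul (by norm_num)]
  congr 1
  ring

lemma hermiteMonic_eval (n : ℕ) (x : ℝ) :
    (hermiteMonic n).eval x =
      (Real.sqrt 2)⁻¹ ^ n * ((hermite n).map (Int.castRingHom ℝ)).eval (Real.sqrt 2 * x) := by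
  simp [hermiteMonic, two_rpow_neg_half]

lemma hermiteMonic_eval_zero (x : ℝ) : (hermiteMonic 0).eval x = 1 := by
  simp [hermiteMonic_eval]

lemma hermiteMonic_eval_one (x : ℝ) : (hermiteMonic 1).eval x = x := by
  simp [hermiteMonic_eval]

lemma hermiteMonic_eval_succ_succ (n : ℕ) (x : ℝ) :
    (hermiteMonic (n + 2)).eval x =
      x * (hermiteMonic (n + 1)).eval x - ((n : ℝ) + 1) / 2 * (hermiteMonic n).eval x := by
  simp only [hermiteMonic_eval]
  rw [hermite_succ (n + 1), derivative_hermite_succ]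
  simp only [Polynomial.map_sub, Polynomial.map_mul, Polynomial.map_X, Polynomial.map_add,
    Polynomial.map_natCast, Polynomial.map_one, eval_sub, eval_mul, eval_X, eval_add,
    eval_natCast, eval_one]
  have h2 : (Real.sqrt 2)⁻¹ * Real.sqrt 2 = 1 := inv_mul_cancel₀ (by positivity)
  have h3 : (Real.sqrt 2)⁻¹ ^ 2 = 1 / 2 := by rw [inv_pow, Real.sq_sqrt (by norm_num)]; norm_num
  generalize eval (√2 * x) (map (Int.castRingHom ℝ) (hermite (n + 1))) = a
  generalize eval (√2 * x) (map (Int.castRingHom ℝ) (hermite n)) = b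
  rw [pow_add _ n 2, pow_succ _ n]
  linear_combination ((√2)⁻¹ ^ n * (√2)⁻¹ * x * a) * h2 - ((√2)⁻¹ ^ n * (n + 1) * b) * h3

/-- The exponential generating function `∑ₙ h_n(x) yⁿ tⁿ / n!`, as a formal power series in `t`. -/
noncomputable def hermiteGen (x y : ℝ) : PowerSeries ℝ :=
  PowerSeries.mk fun n => (hermiteMonic n).eval x * y ^ n / (n.factorial : ℝ)

lemma coeff_zero_hermiteGen (x y : ℝ) : PowerSeries.coeff 0 (hermiteGen x y) = 1 := by
  simp [hermiteGen, hermiteMonic_eval_zero]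

lemma derivative_hermiteGen (x y : ℝ) :
    PowerSeries.derivative ℝ (hermiteGen x y) =
      (PowerSeries.C (x * y) - PowerSeries.C (y ^ 2 / 2) * PowerSeries.X) * hermiteGen x y := by
  ext n
  rw [PowerSeries.coeff_derivative, sub_mul, map_sub, mul_assoc, PowerSeries.coeff_C_mul,
      PowerSeries.coeff_C_mul]
  rcases n with _ | n
  · simp [hermiteGen, hermiteMonic_eval_zero, hermiteMonic_eval_one]
  · rw [PowerSeries.coeff_succ_X_mul]
    simp only [hermiteGen, PowerSeries.coeff_mk, hermiteMonic_eval_succ_succ, Nat.factorial_succ]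
    have : (n.factorial : ℝ) ≠ 0 := by positivity
    push_cast
    field_simp
    ring

lemma derivative_prod_hermiteGen {ι : Type*} (s : Finset ι) (x y : ι → ℝ) :
    PowerSeries.derivative ℝ (∏ i ∈ s, hermiteGen (x i) (y i)) =
      (PowerSeries.C (∑ i ∈ s, x i * y i) -
        PowerSeries.C ((∑ i ∈ s, y i ^ 2) / 2) * PowerSeries.X) *
          ∏ i ∈ s, hermiteGen (x i) (y i) := by
  classical
  induction s using Finset.induction_on with
  | empty => simp
  | insert a s ha ih =>
    rw [Finset.prod_insert ha, Finset.sum_insert ha, Finset.sum_insert ha, Derivation.leibniz, ih,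
      derivative_hermiteGen]
    simp only [smul_eq_mul, add_div, map_add]
    ring

/-- Addition formula for the monic Hermite polynomials: if `y_1^2 + ⋯ + y_k^2 = 1`, then
`h_l(x_1 y_1 + ⋯ + x_k y_k) = Σ_{l_1+⋯+l_k=l} (l!/(l_1!⋯l_k!)) y_1^{l_1}⋯y_k^{l_k}
  h_{l_1}(x_1)⋯h_{l_k}(x_k)`. -/
theorem hermiteMonic_addition_formula (l k : ℕ) (hk : 1 ≤ k)
    (x y : Fin k → ℝ) (hy : ∑ i, (y i) ^ 2 = 1) :
    (hermiteMonic l).eval (∑ i, x i * y i) =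
      ∑ f ∈ Finset.Nat.antidiagonalTuple k l,
        ((l.factorial : ℝ) / ∏ i, ((f i).factorial : ℝ)) *
          (∏ i, y i ^ f i) * ∏ i, (hermiteMonic (f i)).eval (x i) := by
  have key : hermiteGen (∑ i, x i * y i) 1 = ∏ i, hermiteGen (x i) (y i) := by
    refine eq_of_derivative_eq (∑ i, x i * y i) (1 / 2) _ _ ?_ ?_ ?_
    · simpa using derivative_hermiteGen (∑ i, x i * y i) 1
    · simpa [hy] using derivative_prod_hermiteGen Finset.univ x y
    · have h : ∀ i, PowerSeries.constantCoeff (hermiteGen (x i) (y i)) = 1 := fun i => by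
        simpa using coeff_zero_hermiteGen (x i) (y i)
      rw [coeff_zero_hermiteGen, PowerSeries.coeff_zero_eq_constantCoeff_apply, map_prod]
      simp [h]
  have hl := congrArg (PowerSeries.coeff l) key
  rw [PowerSeries.coeff_prod] at hl
  simp only [hermiteGen, PowerSeries.coeff_mk, one_pow, mul_one] at hl
  have hne : (l.factorial : ℝ) ≠ 0 := by positivity
  rw [div_eq_iff hne, Finset.sum_mul] at hl
  rw [hl]
  refine Finset.sum_nbij' (fun f => ⇑f) (fun f => Finsupp.equivFunOnFinite.symm f) ?_ ?_ ?_ ?_ ?_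
  · intro f hf
    simpa [Finset.Nat.mem_antidiagonalTuple, Finset.mem_finsuppAntidiag] using hf
  · intro f hf
    simpa [Finset.Nat.mem_antidiagonalTuple, Finset.mem_finsuppAntidiag] using hf
  · intro f _
    ext i
    rfl
  · intro f _
    rfl
  · intro f _
    rw [Finset.prod_div_distrib, Finset.prod_mul_distrib]
    ring
end

section
/- Let α, β > -1 be real numbers and let m, n be natural numbers with m ≠ n. Then the monic Jacobi polynomials p_n^{(α,β)} and p_m^{(α,β)} are orthogonal with respect to the Jacobi weight: ∫_{-1}^{1} p_n^{(α,β)}(x) · p_m^{(α,β)}(x) · (1-x)^α (1+x)^β dx = 0. Moreover, p_n^{(α,β)} is a monic polynomial of degree n. -/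
/-!
The orthogonality is the Sturm–Liouville argument. In the variable `t = x - 1`, the explicit
coefficients `c_s` of `p_n` satisfy the two-term recurrence
`(n - s)(n + s + α + β + 1) c_s = 2 (s + 1)(s + 1 + α) c_{s+1}` (`jacobiCoeff_rec`), which says
exactly that `y = p_n` solves the Jacobi equation
`(1 - x²) y'' + (β - α - (α + β + 2) x) y' + n (n + α + β + 1) y = 0` (`jacobiMonic_ode`).

Consequently the weighted Wronskian
`F(x) = (1 - x)^(α+1) (1 + x)^(β+1) (p_n' p_m - p_n p_m')` has derivative
`(m - n)(m + n + α + β + 1) p_n p_m (1 - x)^α (1 + x)^β` on `(-1, 1)`. As `α, β > -1`, `F` is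
continuous on `[-1, 1]`, vanishes at both endpoints, and `F'` is integrable, so `∫ F' = 0`; for
`m ≠ n` the constant is nonzero because `m + n ≥ 1`.
-/

open Polynomial

/-- The monic Jacobi polynomial `p_n^{(α,β)}`, given explicitly by
`p_n^{(α,β)}(x) = Σ_{s=0}^{n} C(n,s) · 2^{n-s} · ((α+s+1)_{n-s}/(α+β+n+s+1)_{n-s}) · (x-1)^s`. -/
noncomputable def jacobiMonic (α β : ℝ) (n : ℕ) : Polynomial ℝ :=
  ∑ s ∈ Finset.range (n + 1),
    Polynomial.C ((n.choose s : ℝ) * 2 ^ (n - s) *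
      ((ascPochhammer ℝ (n - s)).eval (α + s + 1) /
       (ascPochhammer ℝ (n - s)).eval (α + β + n + s + 1))) *
    (Polynomial.X - 1) ^ s

/-- The coefficient of `(x - 1)^s` in the monic Jacobi polynomial of degree `n`. It vanishes for
`s > n` because of the binomial coefficient. -/
noncomputable def jacobiCoeff (α β : ℝ) (n s : ℕ) : ℝ :=
  (n.choose s : ℝ) * 2 ^ (n - s) *
      ((ascPochhammer ℝ (n - s)).eval (α + s + 1) /
       (ascPochhammer ℝ (n - s)).eval (α + β + n + s + 1))

/-- The monic Jacobi polynomial in the shifted variable `t = x - 1`. -/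
noncomputable def jacobiShift (α β : ℝ) (n : ℕ) : Polynomial ℝ :=
  ∑ s ∈ Finset.range (n + 1), C (jacobiCoeff α β n s) * X ^ s

lemma jacobiMonic_eq_comp (α β : ℝ) (n : ℕ) :
    jacobiMonic α β n = (jacobiShift α β n).comp (X - C 1) := by
  simp [jacobiMonic, jacobiShift, jacobiCoeff, Polynomial.sum_comp]

lemma jacobiCoeff_of_lt (α β : ℝ) {n s : ℕ} (h : n < s) : jacobiCoeff α β n s = 0 := by
  simp [jacobiCoeff, Nat.choose_eq_zero_of_lt h]

lemma jacobiCoeff_self (α β : ℝ) (n : ℕ) : jacobiCoeff α β n n = 1 := by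
  simp [jacobiCoeff]

lemma jacobiShift_coeff (α β : ℝ) (n s : ℕ) :
    (jacobiShift α β n).coeff s = jacobiCoeff α β n s := by
  simp only [jacobiShift, finsetSum_coeff, coeff_C_mul_X_pow, Finset.sum_ite_eq,
    Finset.mem_range]
  split_ifs with h
  · rfl
  · exact (jacobiCoeff_of_lt α β (by omega)).symm

lemma jacobiCoeff_rec {α β : ℝ} (hα : -1 < α) (hβ : -1 < β) (n s : ℕ) :
    ((n : ℝ) - s) * (n + s + α + β + 1) * jacobiCoeff α β n s =
      2 * (s + 1) * (s + 1 + α) * jacobiCoeff α β n (s + 1) := by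
  rcases lt_trichotomy s n with h | h | h
  · obtain ⟨k, rfl⟩ : ∃ k, n = s + 1 + k := ⟨n - (s + 1), by omega⟩
    have e1 : s + 1 + k - s = k + 1 := by omega
    have e2 : s + 1 + k - (s + 1) = k := by omega
    have hs : (0 : ℝ) ≤ s := Nat.cast_nonneg s
    have hk : (0 : ℝ) ≤ k := Nat.cast_nonneg k
    have hch : ((s + 1 + k).choose (s + 1) : ℝ) * (s + 1) =
        ((s + 1 + k).choose s : ℝ) * (k + 1) := by
      have := Nat.choose_succ_right_eq (s + 1 + k) s
      rw [e1] at this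
      exact_mod_cast this
    have hpos : 0 < (ascPochhammer ℝ k).eval (α + β + (s + 1 + k) + (s + 1) + 1) :=
      ascPochhammer_pos _ _ (by linarith)
    have h0 : α + β + (s + 1 + k) + s + 1 ≠ 0 := by
      have : 0 < α + β + (s + 1 + k) + s + 1 := by linarith
      exact this.ne'
    simp only [jacobiCoeff, e1, e2, ascPochhammer_succ_left, eval_mul, eval_X, eval_comp,
      eval_add, eval_one]
    push_cast
    rw [show α + (s : ℝ) + 1 + 1 = α + (s + 1) + 1 by ring,
      show α + β + ((s : ℝ) + 1 + k) + s + 1 + 1 = α + β + (s + 1 + k) + (s + 1) + 1 by ring]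
    generalize (ascPochhammer ℝ k).eval (α + β + ((s : ℝ) + 1 + k) + (s + 1) + 1) = D at *
    generalize (ascPochhammer ℝ k).eval (α + ((s : ℝ) + 1) + 1) = N at *
    have hD : D ≠ 0 := hpos.ne'
    field_simp
    linear_combination (-(2 : ℝ) ^ (k + 1) * (α + s + 1) * N *
      (α + β + (s + 1 + k) + s + 1)) * hch
  · subst h
    simp [jacobiCoeff_of_lt]
  · rw [jacobiCoeff_of_lt α β h, jacobiCoeff_of_lt α β (by omega : n < s + 1)]
    simp

/-- The Jacobi differential equation in the shifted variable `t = x - 1`. -/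
lemma jacobiShift_ode {α β : ℝ} (hα : -1 < α) (hβ : -1 < β) (n : ℕ) :
    (X * (X * derivative (derivative (jacobiShift α β n))))
      + C 2 * (X * derivative (derivative (jacobiShift α β n)))
      + C (α + β + 2) * (X * derivative (jacobiShift α β n))
      + C (2 * α + 2) * derivative (jacobiShift α β n) =
    C (n * (n + α + β + 1)) * jacobiShift α β n := by
  ext s
  have h := jacobiCoeff_rec hα hβ n s
  simp only [coeff_add, coeff_C_mul]
  rcases s with _ | _ | s <;>
  · simp only [coeff_X_mul, coeff_X_mul_zero, coeff_derivative, jacobiShift_coeff] at h ⊢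
    push_cast at h ⊢
    linear_combination -h

lemma jacobiMonic_ode {α β : ℝ} (hα : -1 < α) (hβ : -1 < β) (n : ℕ) (x : ℝ) :
    (1 - x ^ 2) * (derivative (derivative (jacobiMonic α β n))).eval x
      + (β - α - (α + β + 2) * x) * (derivative (jacobiMonic α β n)).eval x
      + n * (n + α + β + 1) * (jacobiMonic α β n).eval x = 0 := by
  have h := congrArg (Polynomial.eval (x - 1)) (jacobiShift_ode hα hβ n)
  simp only [eval_add, eval_mul, eval_X, eval_C] at h
  simp only [jacobiMonic_eq_comp, derivative_comp, derivative_sub, derivative_X, derivative_C,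
    sub_zero, one_mul, eval_comp, eval_sub, eval_X, eval_C]
  linear_combination -h

lemma jacobiShift_natDegree_le (α β : ℝ) (n : ℕ) : (jacobiShift α β n).natDegree ≤ n := by
  rw [natDegree_le_iff_coeff_eq_zero]
  intro s hs
  rw [jacobiShift_coeff, jacobiCoeff_of_lt α β hs]

lemma jacobiShift_natDegree (α β : ℝ) (n : ℕ) : (jacobiShift α β n).natDegree = n :=
  natDegree_eq_of_le_of_coeff_ne_zero (jacobiShift_natDegree_le α β n)
    (by rw [jacobiShift_coeff, jacobiCoeff_self]; exact one_ne_zero)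

lemma jacobiShift_monic (α β : ℝ) (n : ℕ) : (jacobiShift α β n).Monic :=
  monic_of_natDegree_le_of_coeff_eq_one n (jacobiShift_natDegree_le α β n)
    (by rw [jacobiShift_coeff, jacobiCoeff_self])

lemma jacobiWeight_intervalIntegrable {α β : ℝ} (hα : -1 < α) (hβ : -1 < β) :
    IntervalIntegrable (fun x : ℝ => (1 - x) ^ α * (1 + x) ^ β) MeasureTheory.volume (-1) 1 := by
  -- Near each endpoint only one of the two factors is singular.
  have hl : IntervalIntegrable (fun x : ℝ => (1 + x) ^ β) MeasureTheory.volume (-1) 0 := by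
    have := (intervalIntegral.intervalIntegrable_rpow' (a := 0) (b := 1) hβ).comp_add_left 1
    simpa using this
  have hr : IntervalIntegrable (fun x : ℝ => (1 - x) ^ α) MeasureTheory.volume 0 1 := by
    have := (intervalIntegral.intervalIntegrable_rpow' (a := 1) (b := 0) hα).comp_sub_left 1
    simpa using this
  refine IntervalIntegrable.trans (b := 0) ?_ ?_
  · refine hl.continuousOn_mul (g := fun x : ℝ => (1 - x) ^ α) ?_
    refine ContinuousOn.rpow_const (by fun_prop) fun x hx => Or.inl ?_
    rw [Set.uIcc_of_le (by norm_num)] at hx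
    linarith [hx.2]
  · refine hr.mul_continuousOn (g := fun x : ℝ => (1 + x) ^ β) ?_
    refine ContinuousOn.rpow_const (by fun_prop) fun x hx => Or.inl ?_
    rw [Set.uIcc_of_le (by norm_num)] at hx
    linarith [hx.1]

/-- The weighted Wronskian `(1 - x)^(α+1) (1 + x)^(β+1) (p_n' p_m - p_n p_m')`. -/
noncomputable def jacobiWronskian (α β : ℝ) (m n : ℕ) (x : ℝ) : ℝ :=
  (1 - x) ^ (α + 1) * (1 + x) ^ (β + 1) *
    ((derivative (jacobiMonic α β n)).eval x * (jacobiMonic α β m).eval x -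
      (jacobiMonic α β n).eval x * (derivative (jacobiMonic α β m)).eval x)

lemma jacobiWronskian_hasDerivAt {α β : ℝ} (hα : -1 < α) (hβ : -1 < β) (m n : ℕ) {x : ℝ}
    (hx : x ∈ Set.Ioo (-1 : ℝ) 1) :
    HasDerivAt (jacobiWronskian α β m n)
      (((m : ℝ) - n) * (m + n + α + β + 1) *
        ((jacobiMonic α β n).eval x * (jacobiMonic α β m).eval x *
          (1 - x) ^ α * (1 + x) ^ β)) x := by
  have h1 : 1 - x ≠ 0 := by linarith [hx.2]
  have h2 : 1 + x ≠ 0 := by linarith [hx.1]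
  have d1 : HasDerivAt (fun y : ℝ => (1 - y) ^ (α + 1)) (-1 * (α + 1) * (1 - x) ^ α) x := by
    simpa using ((hasDerivAt_id x).const_sub 1).rpow_const (p := α + 1) (Or.inl h1)
  have d2 : HasDerivAt (fun y : ℝ => (1 + y) ^ (β + 1)) (1 * (β + 1) * (1 + x) ^ β) x := by
    simpa using ((hasDerivAt_id x).const_add 1).rpow_const (p := β + 1) (Or.inl h2)
  have d3 := ((derivative (jacobiMonic α β n)).hasDerivAt x).mul
    ((jacobiMonic α β m).hasDerivAt x)
  have d4 := ((jacobiMonic α β n).hasDerivAt x).mul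
    ((derivative (jacobiMonic α β m)).hasDerivAt x)
  refine ((d1.mul d2).mul (d3.sub d4)).congr_deriv ?_
  have on := jacobiMonic_ode hα hβ n x
  have om := jacobiMonic_ode hα hβ m x
  simp only [Pi.mul_apply, Pi.sub_apply, Real.rpow_add_one h1, Real.rpow_add_one h2]
  linear_combination ((1 - x) ^ α * (1 + x) ^ β) *
    ((jacobiMonic α β m).eval x * on - (jacobiMonic α β n).eval x * om)

lemma jacobiWronskian_continuous {α β : ℝ} (hα : -1 < α) (hβ : -1 < β) (m n : ℕ) :
    Continuous (jacobiWronskian α β m n) := by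
  have c1 : Continuous fun x : ℝ => (1 - x) ^ (α + 1) :=
    Continuous.rpow_const (by fun_prop) fun _ => Or.inr (by linarith)
  have c2 : Continuous fun x : ℝ => (1 + x) ^ (β + 1) :=
    Continuous.rpow_const (by fun_prop) fun _ => Or.inr (by linarith)
  unfold jacobiWronskian
  fun_prop

/-- For `α, β > -1` and `m ≠ n`, the monic Jacobi polynomials `p_n^{(α,β)}` and
`p_m^{(α,β)}` are orthogonal with respect to the weight `(1-x)^α (1+x)^β` on `(-1,1)`;
moreover `p_n^{(α,β)}` is monic of degree `n`. -/
theorem jacobiMonic_orthogonal_monic (α β : ℝ) (hα : -1 < α) (hβ : -1 < β)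
    (m n : ℕ) (hmn : m ≠ n) :
    (∫ x in (-1 : ℝ)..1,
        (jacobiMonic α β n).eval x * (jacobiMonic α β m).eval x *
          (1 - x) ^ α * (1 + x) ^ β) = 0 ∧
    (jacobiMonic α β n).Monic ∧ (jacobiMonic α β n).natDegree = n := by
  refine ⟨?_, ?_, ?_⟩
  · have hint : IntervalIntegrable (fun x : ℝ =>
        (jacobiMonic α β n).eval x * (jacobiMonic α β m).eval x *
          (1 - x) ^ α * (1 + x) ^ β) MeasureTheory.volume (-1) 1 := by
      have := (jacobiWeight_intervalIntegrable hα hβ).continuousOn_mul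
        (g := fun x : ℝ => (jacobiMonic α β n).eval x * (jacobiMonic α β m).eval x)
        (by fun_prop)
      simpa only [mul_assoc] using this
    have key := intervalIntegral.integral_eq_sub_of_hasDerivAt_of_le (by norm_num : (-1 : ℝ) ≤ 1)
      (jacobiWronskian_continuous hα hβ m n).continuousOn
      (fun x hx => jacobiWronskian_hasDerivAt hα hβ m n hx) (hint.const_mul _)
    have z1 : jacobiWronskian α β m n 1 = 0 := by
      simp [jacobiWronskian, Real.zero_rpow (by linarith : α + 1 ≠ 0)]
    have z2 : jacobiWronskian α β m n (-1) = 0 := by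
      simp [jacobiWronskian, Real.zero_rpow (by linarith : β + 1 ≠ 0)]
    rw [intervalIntegral.integral_const_mul, z1, z2, sub_zero] at key
    refine (mul_eq_zero.mp key).resolve_left (mul_ne_zero ?_ ?_)
    · exact sub_ne_zero.mpr (Nat.cast_injective.ne hmn)
    · have : (1 : ℝ) ≤ (m : ℝ) + n := by exact_mod_cast (by omega : 1 ≤ m + n)
      have : 0 < (m : ℝ) + n + α + β + 1 := by linarith
      exact this.ne'
  · rw [jacobiMonic_eq_comp]
    exact (jacobiShift_monic α β n).comp_X_sub_C 1
  · rw [jacobiMonic_eq_comp, natDegree_comp, natDegree_X_sub_C, mul_one, jacobiShift_natDegree]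
end
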